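/- arXiv:1308.0758 — 3 statements merged into one kernel-verified Lean document; each statement's English description precedes it below -/
import Mathlib

section
/- Suppose R is a semiregular right small dual ring. Then (1) R is a left C2 ring, and (2) J(R) equals the left singular ideal Z_l of R. -/
open Pointwise

/-- The left annihilator `l(X) = {r : ∀ x ∈ X, r * x = 0}` of a subset of a ring. -/
def lAnn (R : Type*) [Ring R] (X : Set R) : Set R := {r : R | ∀ x ∈ X, r * x = 0}

/-- The right annihilator `r(X) = {r : ∀ x ∈ X, x * r = 0}` of a subset of a ring. -/
def rAnn (R : Type*) [Ring R] (X : Set R) : Set R := {r : R | ∀ x ∈ X, x * r = 0}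

/-- A right ideal of `R` (a submodule of `R` as a right `R`-module, i.e. an
`Rᵐᵒᵖ`-submodule) is small if `I + K ≠ R` for every proper right ideal `K`. -/
def IsSmallRightIdeal (R : Type*) [Ring R] (I : Submodule Rᵐᵒᵖ R) : Prop :=
  ∀ K : Submodule Rᵐᵒᵖ R, K ≠ ⊤ → I ⊔ K ≠ ⊤

/-- A left ideal of `R` is small if `I + K ≠ R` for every proper left ideal `K`. -/
def IsSmallLeftIdeal (R : Type*) [Ring R] (I : Ideal R) : Prop :=
  ∀ K : Ideal R, K ≠ ⊤ → I ⊔ K ≠ ⊤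

/-- `R` is right small dual if `rl(I) = I` for every small right ideal `I`. -/
def IsRightSmallDual (R : Type*) [Ring R] : Prop :=
  ∀ I : Submodule Rᵐᵒᵖ R, IsSmallRightIdeal R I → rAnn R (lAnn R (I : Set R)) = (I : Set R)

/-- `R` is left small dual if `lr(I) = I` for every small left ideal `I`. -/
def IsLeftSmallDual (R : Type*) [Ring R] : Prop :=
  ∀ I : Ideal R, IsSmallLeftIdeal R I → lAnn R (rAnn R (I : Set R)) = (I : Set R)

/-- `R` is right dual if `rl(I) = I` for every right ideal `I`. -/
def IsRightDual (R : Type*) [Ring R] : Prop :=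
  ∀ I : Submodule Rᵐᵒᵖ R, rAnn R (lAnn R (I : Set R)) = (I : Set R)

/-- `R` is left dual if `lr(I) = I` for every left ideal `I`. -/
def IsLeftDual (R : Type*) [Ring R] : Prop :=
  ∀ I : Ideal R, lAnn R (rAnn R (I : Set R)) = (I : Set R)

/-- A right `R`-module is torsionless if its nonzero elements are separated by
right `R`-linear maps to `R`. -/
def IsTorsionlessRight (R : Type*) [Ring R] (M : Type*) [AddCommGroup M] [Module Rᵐᵒᵖ M] : Prop :=
  ∀ m : M, m ≠ 0 → ∃ f : M →ₗ[Rᵐᵒᵖ] R, f m ≠ 0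

/-- The left annihilator of a subset, as a left ideal. -/
def lAnnIdeal (R : Type*) [Ring R] (X : Set R) : Ideal R where
  carrier := {r : R | ∀ x ∈ X, r * x = 0}
  add_mem' := fun {a b} ha hb x hx => by rw [add_mul, ha x hx, hb x hx, add_zero]
  zero_mem' := fun x _ => zero_mul x
  smul_mem' := fun c a ha x hx => by
    simp only [smul_eq_mul, Set.mem_setOf_eq] at *
    rw [mul_assoc, ha x hx, mul_zero]

/-- A right ideal `I` has a weak supplement if there is a right ideal `K` with
`I + K = R` and `I ∩ K` small. -/
def HasWeakSupplementRight (R : Type*) [Ring R] (I : Submodule Rᵐᵒᵖ R) : Prop :=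
  ∃ K : Submodule Rᵐᵒᵖ R, I ⊔ K = ⊤ ∧ IsSmallRightIdeal R (I ⊓ K)

/-- A left ideal `I` has a weak supplement if there is a left ideal `K` with
`I + K = R` and `I ∩ K` small. -/
def HasWeakSupplementLeft (R : Type*) [Ring R] (I : Ideal R) : Prop :=
  ∃ K : Ideal R, I ⊔ K = ⊤ ∧ IsSmallLeftIdeal R (I ⊓ K)

/-- `R` is semilocal if `R/J(R)` is a semisimple ring (equivalently, a semisimple
left `R`-module). -/
def IsSemilocalRing (R : Type*) [Ring R] : Prop :=
  IsSemisimpleModule R (R ⧸ Ideal.jacobson (⊥ : Ideal R))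

/-- `R` is semiperfect if it is semilocal and idempotents lift modulo `J(R)`. -/
def IsSemiperfectRing (R : Type*) [Ring R] : Prop :=
  IsSemilocalRing R ∧
    ∀ a : R, a * a - a ∈ Ideal.jacobson (⊥ : Ideal R) →
      ∃ e : R, e * e = e ∧ e - a ∈ Ideal.jacobson (⊥ : Ideal R)

/-- `R` is `J`-regular if `R/J(R)` is von Neumann regular. -/
def IsJRegular (R : Type*) [Ring R] : Prop :=
  ∀ a : R, ∃ b : R, a * b * a - a ∈ Ideal.jacobson (⊥ : Ideal R)

/-- `R` is left perfect: `R/J(R)` is semisimple and `J(R)` is left T-nilpotent. -/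
def IsLeftPerfect (R : Type*) [Ring R] : Prop :=
  IsSemilocalRing R ∧
    ∀ a : ℕ → R, (∀ i, a i ∈ Ideal.jacobson (⊥ : Ideal R)) →
      ∃ n : ℕ, (List.ofFn fun i : Fin (n + 1) => a i).prod = 0

/-- A right ideal `E` is essential if `E ∩ T ≠ 0` for every nonzero right ideal `T`. -/
def IsEssentialRightIdeal (R : Type*) [Ring R] (E : Submodule Rᵐᵒᵖ R) : Prop :=
  ∀ T : Submodule Rᵐᵒᵖ R, T ≠ ⊥ → E ⊓ T ≠ ⊥

/-!
Annihilator duality on the principal right ideals inside `J(R)` makes `R` left P-injective: if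
`l(a) ⊆ l(x)` and `aba - a ∈ J(R)`, then `l(aba - a) ⊆ l(abx - x)`, so `abx - x` lies in
`(aba - a)R ⊆ aR`, and hence so does `x`. Left P-injectivity gives both conclusions. An isomorphism
from a left ideal `I` onto a direct summand is right multiplication by some `b`, because `I` is
principal; multiplying by `b`, projecting to the summand and returning to `I` then retracts `R`
onto `I`. For `J = Z_l`, P-injectivity turns a trivial left annihilator of `1 - xr` into a right
inverse.
-/

/-- `R` is left P-injective if `rl(a) = aR` for every `a`, i.e. `l(a) ⊆ l(x)` forces `x ∈ aR`;
`a ∣ x` is divisibility on the left, `x = a * c`. This is equivalent to the usual definition that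
every left linear map `Ra → R` is right multiplication by an element of `R`. -/
def IsLeftPInjective (R : Type*) [Ring R] : Prop :=
  ∀ a x : R, (∀ y, y * a = 0 → y * x = 0) → a ∣ x

/-- `R` is left C2 if a left ideal isomorphic to a direct summand of `R` is a direct summand. -/
def IsLeftC2 (R : Type*) [Ring R] : Prop :=
  ∀ I : Ideal R, (∃ J : Ideal R, (∃ J' : Ideal R, IsCompl J J') ∧ Nonempty (I ≃ₗ[R] J)) →
    ∃ I' : Ideal R, IsCompl I I'

/-- The left singular ideal `Z_l`, as a set: the `x` whose left annihilator is essential. -/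
def leftSingularSet (R : Type*) [Ring R] : Set R :=
  {x | ∀ L : Ideal R, L ≠ ⊥ → lAnnIdeal R {x} ⊓ L ≠ ⊥}

section

variable {R : Type*} [Ring R]

theorem isUnit_of_one_sub_mem_jacobson_bot {u : R} (hu : 1 - u ∈ Ideal.jacobson (⊥ : Ideal R)) :
    IsUnit u := by
  have exists_left_inv {v : R} (hv : v - 1 ∈ Ideal.jacobson (⊥ : Ideal R)) :
      ∃ w, w * v = 1 := by
    simpa only [Submodule.mem_bot, sub_eq_zero] using
      Ideal.exists_mul_sub_mem_of_sub_one_mem_jacobson v hv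
  obtain ⟨v, hvu⟩ := exists_left_inv (sub_mem_comm_iff.mp hu)
  have hv : v - 1 ∈ Ideal.jacobson (⊥ : Ideal R) := by
    simpa only [mul_sub, mul_one, hvu] using Ideal.mul_mem_left _ v hu
  obtain ⟨w, hwv⟩ := exists_left_inv hv
  have hwu : w = u := left_inv_eq_right_inv hwv hvu
  exact isUnit_iff_exists.mpr ⟨v, hwu ▸ hwv, hvu⟩

theorem isUnit_one_sub_mul_comm {a b : R} (h : IsUnit (1 - a * b)) : IsUnit (1 - b * a) := by
  have swap := spectrum.unit_mem_mul_comm (R := ℤ) (a := a) (b := b) (r := 1)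
  simpa only [spectrum.mem_iff, Units.val_one, map_one, not_iff_not, h, true_iff] using swap

theorem mem_jacobson_bot_of_forall_right_inv {x : R} (hx : ∀ r, ∃ u, (1 - x * r) * u = 1) :
    x ∈ Ideal.jacobson (⊥ : Ideal R) := by
  have isUnit_one_sub (r : R) : IsUnit (1 - x * r) := by
    obtain ⟨u, hu⟩ := hx r
    have hu' : 1 - x * -(r * u) = u := by
      rw [← hu]; noncomm_ring
    obtain ⟨w, hw⟩ := hx (-(r * u))
    rw [hu'] at hw
    have huw : 1 - x * r = w := left_inv_eq_right_inv hu hw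
    exact isUnit_iff_exists.mpr ⟨u, hu, huw ▸ hw⟩
  refine Ideal.mem_jacobson_iff.mpr fun y => ?_
  obtain ⟨z, hz⟩ := (isUnit_one_sub_mul_comm (isUnit_one_sub (-y))).exists_left_inv
  refine ⟨z, (Submodule.mem_bot R).mpr ?_⟩
  rw [← hz]
  noncomm_ring

theorem isSmallRightIdeal_of_subset_jacobson {I : Submodule Rᵐᵒᵖ R}
    (hI : (I : Set R) ⊆ Ideal.jacobson (⊥ : Ideal R)) : IsSmallRightIdeal R I := by
  refine fun K => mt fun hIK => ?_
  obtain ⟨i, hi, k, hk, hik⟩ := Submodule.mem_sup.mp (hIK ▸ Submodule.mem_top : (1 : R) ∈ I ⊔ K)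
  have hk_unit : IsUnit k :=
    isUnit_of_one_sub_mem_jacobson_bot (by rw [← hik, add_sub_cancel_right]; exact hI hi)
  obtain ⟨z, hz⟩ := hk_unit.exists_right_inv
  refine eq_top_iff.mpr fun x _ => ?_
  have hkx : k * (z * x) ∈ K := K.smul_mem (MulOpposite.op (z * x)) hk
  rwa [← mul_assoc, hz, one_mul] at hkx

theorem mem_span_op_singleton {a x : R} : x ∈ Submodule.span Rᵐᵒᵖ {a} ↔ a ∣ x := by
  rw [Submodule.mem_span_singleton]
  exact ⟨fun ⟨c, hc⟩ => ⟨c.unop, hc.symm⟩, fun ⟨c, hc⟩ => ⟨MulOpposite.op c, hc.symm⟩⟩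

theorem IsRightSmallDual.dvd_of_mem_jacobson (h : IsRightSmallDual R) {a x : R}
    (ha : a ∈ Ideal.jacobson (⊥ : Ideal R)) (hx : ∀ y, y * a = 0 → y * x = 0) : a ∣ x := by
  have hsmall : IsSmallRightIdeal R (Submodule.span Rᵐᵒᵖ {a}) := by
    refine isSmallRightIdeal_of_subset_jacobson fun b hb => ?_
    obtain ⟨c, rfl⟩ := mem_span_op_singleton.mp hb
    exact Ideal.mul_mem_right c _ ha
  have hx_rl : x ∈ rAnn R (lAnn R (Submodule.span Rᵐᵒᵖ {a} : Set R)) :=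
    fun y hy => hx y (hy a (Submodule.mem_span_singleton_self a))
  rw [h _ hsmall] at hx_rl
  exact mem_span_op_singleton.mp hx_rl

theorem IsRightSmallDual.isLeftPInjective (h : IsRightSmallDual R) (hreg : IsJRegular R) :
    IsLeftPInjective R := by
  intro a x hx
  obtain ⟨b, hb⟩ := hreg a
  have hdvd : a * b * a - a ∣ a * b * x - x := by
    refine h.dvd_of_mem_jacobson hb fun y hy => ?_
    have hya : (y * a * b - y) * a = 0 := by
      rw [← hy]; noncomm_ring
    rw [← hx _ hya]; noncomm_ring
  have ha : a ∣ a * b * a - a := ⟨b * a - 1, by noncomm_ring⟩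
  have habx : a ∣ a * b * x := ⟨b * x, mul_assoc a b x⟩
  exact (dvd_sub_right habx).mp (ha.trans hdvd)

theorem mem_leftSingularSet_iff {x : R} :
    x ∈ leftSingularSet R ↔ ∀ y, y ≠ 0 → ∃ t, t * y ≠ 0 ∧ t * y * x = 0 := by
  constructor
  · intro hx y hy
    obtain ⟨w, ⟨hwx, hwy⟩, hw⟩ := Submodule.exists_mem_ne_zero_of_ne_bot <|
      hx (Ideal.span {y}) (mt Ideal.span_singleton_eq_bot.mp hy)
    obtain ⟨t, rfl⟩ := Ideal.mem_span_singleton'.mp hwy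
    exact ⟨t, hw, hwx x rfl⟩
  · intro hx L hL
    obtain ⟨y, hyL, hy⟩ := Submodule.exists_mem_ne_zero_of_ne_bot hL
    obtain ⟨t, hty, htyx⟩ := hx y hy
    have hty_mem : t * y ∈ lAnnIdeal R {x} ⊓ L :=
      ⟨fun z hz => by rwa [Set.mem_singleton_iff.mp hz], L.mul_mem_left t hyL⟩
    exact (Submodule.ne_bot_iff _).mpr ⟨t * y, hty_mem, hty⟩

theorem IsLeftPInjective.jacobson_subset_leftSingularSet (hP : IsLeftPInjective R) :
    (Ideal.jacobson (⊥ : Ideal R) : Set R) ⊆ leftSingularSet R := by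
  refine fun x hx => mem_leftSingularSet_iff.mpr fun y hy => ?_
  by_contra! hann
  have hdvd : y * x ∣ y :=
    hP (y * x) y fun t ht => by_contra fun hty => hann t hty (by rwa [mul_assoc])
  obtain ⟨c, hc⟩ := hdvd
  have hunit : IsUnit (1 - x * c) :=
    isUnit_of_one_sub_mem_jacobson_bot (by simpa using Ideal.mul_mem_right c _ hx)
  exact hy <| hunit.mul_left_eq_zero.mp <| by rw [mul_sub, mul_one, ← mul_assoc, ← hc, sub_self]

theorem IsLeftPInjective.leftSingularSet_subset_jacobson (hP : IsLeftPInjective R) :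
    leftSingularSet R ⊆ Ideal.jacobson (⊥ : Ideal R) := by
  refine fun x hx => mem_jacobson_bot_of_forall_right_inv fun r => ?_
  have hdvd : 1 - x * r ∣ 1 := by
    refine hP _ _ fun y hy => ?_
    by_contra hy'
    rw [mul_one] at hy'
    obtain ⟨t, hty, htyx⟩ := mem_leftSingularSet_iff.mp hx y hy'
    apply hty
    calc t * y = t * (y * (1 - x * r)) + t * y * x * r := by noncomm_ring
      _ = 0 := by rw [hy, htyx, mul_zero, zero_mul, add_zero]
  obtain ⟨u, hu⟩ := hdvd
  exact ⟨u, hu.symm⟩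

theorem IsLeftPInjective.jacobson_eq_leftSingularSet (hP : IsLeftPInjective R) :
    (Ideal.jacobson (⊥ : Ideal R) : Set R) = leftSingularSet R :=
  hP.jacobson_subset_leftSingularSet.antisymm hP.leftSingularSet_subset_jacobson

theorem IsLeftPInjective.exists_eq_mul_right (hP : IsLeftPInjective R) {I : Ideal R}
    (hI : I.IsPrincipal) (φ : I →ₗ[R] R) : ∃ b, ∀ x : I, φ x = x * b := by
  obtain ⟨a, rfl⟩ := hI
  let a' : Submodule.span R {a} := ⟨a, Submodule.mem_span_singleton_self a⟩
  have hann (y : R) (hy : y * a = 0) : y * φ a' = 0 := by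
    have hya' : y • a' = 0 := Subtype.ext hy
    rw [← smul_eq_mul, ← map_smul, hya', map_zero]
  obtain ⟨b, hb⟩ := hP a (φ a') hann
  refine ⟨b, fun ⟨x, hx⟩ => ?_⟩
  obtain ⟨t, rfl⟩ := Submodule.mem_span_singleton.mp hx
  calc φ ⟨t • a, hx⟩ = t • φ a' := map_smul φ t a'
    _ = t • a * b := by rw [hb, smul_eq_mul, smul_eq_mul, mul_assoc]

theorem IsLeftPInjective.isLeftC2 (hP : IsLeftPInjective R) : IsLeftC2 R := by
  rintro I ⟨J, ⟨J', hJ⟩, ⟨φ⟩⟩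
  let π : R →ₗ[R] J := J.projectionOnto J' hJ
  have hRI : Module.IsPrincipal R I := .of_surjective (φ.symm.toLinearMap ∘ₗ π) <|
    φ.symm.surjective.comp (Submodule.projectionOnto_surjective hJ)
  have hI : I.IsPrincipal := Module.isPrincipal_submodule_iff.mp hRI
  obtain ⟨b, hb⟩ := hP.exists_eq_mul_right hI (J.subtype ∘ₗ φ.toLinearMap)
  let retraction : R →ₗ[R] I := φ.symm.toLinearMap ∘ₗ π ∘ₗ LinearMap.toSpanSingleton R R b
  have retraction_apply (x : I) : retraction x = x := by
    have hxb : π (x * b) = φ x := by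
      rw [← hb x]; exact Submodule.projectionOnto_apply_left hJ (φ x)
    exact φ.symm_apply_eq.mpr hxb
  exact ⟨LinearMap.ker retraction, LinearMap.isCompl_of_proj retraction_apply⟩

end

theorem semiregular_rightSmallDual_C2_and_J_eq_Zl_general (R : Type*) [Ring R]
    (hreg : IsJRegular R) (h : IsRightSmallDual R) :
    (∀ I : Ideal R,
      (∃ J : Ideal R, (∃ J' : Ideal R, IsCompl J J') ∧ Nonempty (I ≃ₗ[R] J)) →
        ∃ I' : Ideal R, IsCompl I I') ∧
    (Ideal.jacobson (⊥ : Ideal R) : Set R) =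
      {x : R | ∀ L : Ideal R, L ≠ ⊥ → lAnnIdeal R {x} ⊓ L ≠ ⊥} :=
  have hP := h.isLeftPInjective hreg
  ⟨hP.isLeftC2, hP.jacobson_eq_leftSingularSet⟩

/-- If `R` is semiregular (`R/J` von Neumann regular and idempotents
lift modulo `J`) and right small dual, then `R` is a left C2 ring and `J = Z_l`. -/
theorem semiregular_rightSmallDual_C2_and_J_eq_Zl (R : Type*) [Ring R]
    (hreg : IsJRegular R)
    (hlift : ∀ a : R, a * a - a ∈ Ideal.jacobson (⊥ : Ideal R) →
      ∃ e : R, e * e = e ∧ e - a ∈ Ideal.jacobson (⊥ : Ideal R))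
    (h : IsRightSmallDual R) :
    (∀ I : Ideal R,
      (∃ J : Ideal R, (∃ J' : Ideal R, IsCompl J J') ∧ Nonempty (I ≃ₗ[R] J)) →
        ∃ I' : Ideal R, IsCompl I I') ∧
    (Ideal.jacobson (⊥ : Ideal R) : Set R) =
      {x : R | ∀ L : Ideal R, L ≠ ⊥ → lAnnIdeal R {x} ⊓ L ≠ ⊥} :=
  semiregular_rightSmallDual_C2_and_J_eq_Zl_general R hreg h
end

section
/- For a ring R the following are equivalent: (1) R is a dual ring; (2) R is a semilocal and small dual ring; (3) R is a semiperfect and small dual ring. -/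
open Pointwise

/-! In a dual ring the two annihilator maps are mutually inverse order-reversing bijections between
left and right ideals. Zorn's lemma enlarges disjoint right ideals to maximal ones, so on the other
side left ideals have supplements: whenever `I + K = R` there is `P ⊆ I` minimal with `P + K = R`,
and then `P ∩ K` is small, i.e. contained in `J(R)`. Semilocality follows. If `a² - a ∈ J(R)`, there
are mutual supplements `P ⊆ Ra` and `Q ⊆ R(1 - a)`. Writing `1 = x + y` with `x ∈ P` and `y ∈ Q`,
minimality gives `x ∈ Rx²` and `y ∈ Ry²`, so `xy ∈ R(xy)²`; as `xy ∈ P ∩ Q ⊆ J(R)`, this forces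
`xy = 0`. Hence `x` is an idempotent, and it lifts `a`.

Conversely, let `R` be semilocal and small dual. A left ideal `I` has a weak supplement `K`, and
`I + K = R` implies `r(I ∩ K) = r(I) + r(K)`, so `lr(I) ∩ lr(K) = lr(I ∩ K) = I ∩ K`; the modular
law then gives `lr(I) = I`.
-/

section Lattice

variable {α β : Type*}

/-- `p` is a supplement of `b`: it is minimal among the elements whose join with `b` is `⊤`. For the
lattice of submodules of a module this is the usual notion of supplement. -/
def IsSupplement [PartialOrder α] [OrderTop α] (p b : α) : Prop :=
  Minimal (Codisjoint b) p

/-- If two elements have join `⊤`, then each of them contains a supplement of the other. A module is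
amply supplemented in the usual sense when its lattice of submodules is. -/
def IsAmplySupplemented (α : Type*) [PartialOrder α] [OrderTop α] : Prop :=
  ∀ ⦃a b : α⦄, Codisjoint a b → ∃ p ≤ a, IsSupplement p b

theorem IsSupplement.inf_sup_ne_top [Lattice α] [OrderTop α] [IsModularLattice α] {p b c : α}
    (h : IsSupplement p b) (hc : c ≠ ⊤) : b ⊓ p ⊔ c ≠ ⊤ := by
  contrapose! hc
  have hp : b ⊓ p ⊔ c ⊓ p = p := by
    rw [← sup_inf_assoc_of_le c inf_le_right, hc, top_inf_eq]
  have hbc : Codisjoint b (c ⊓ p) := by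
    rw [codisjoint_iff]
    calc b ⊔ c ⊓ p = b ⊔ (b ⊓ p ⊔ c ⊓ p) := by rw [← sup_assoc, sup_inf_self]
      _ = ⊤ := by rw [hp, h.prop.eq_top]
  have hpc : p ≤ c := (h.le_of_le hbc inf_le_right).trans inf_le_left
  rwa [sup_eq_right.2 (inf_le_right.trans hpc)] at hc

theorem IsAmplySupplemented.exists_isSupplement_isSupplement [PartialOrder α] [OrderTop α]
    (h : IsAmplySupplemented α) {a b : α} (hab : Codisjoint a b) :
    ∃ p ≤ a, ∃ q ≤ b, IsSupplement p q ∧ IsSupplement q p := by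
  obtain ⟨p, hpa, hp⟩ := h hab
  obtain ⟨q, hqb, hq⟩ := h hp.prop
  exact ⟨p, hpa, q, hqb, ⟨hq.prop.symm, fun c hc hcp ↦ hp.le_of_le (hc.mono_left hqb) hcp⟩, hq⟩

theorem exists_le_maximal_disjoint [CompleteLattice α] [IsCompactlyGenerated α] {a b : α}
    (hab : Disjoint b a) : ∃ c, a ≤ c ∧ Maximal (Disjoint b) c :=
  zorn_le_nonempty₀ {c | Disjoint b c}
    (fun s hs hchain _ _ ↦
      ⟨sSup s, hchain.directedOn.disjoint_sSup_right.2 fun _ hc ↦ hs hc, fun _ ↦ le_sSup⟩) a hab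

theorem isAmplySupplemented_orderDual [CompleteLattice α] [IsCompactlyGenerated α] :
    IsAmplySupplemented αᵒᵈ := by
  intro a b hab
  obtain ⟨c, hac, hc⟩ := exists_le_maximal_disjoint (disjoint_ofDual_iff.2 hab.symm)
  exact ⟨OrderDual.toDual c, hac, hc.prop.dual,
    fun d hd hdc ↦ hc.le_of_ge (disjoint_ofDual_iff.2 hd) hdc⟩

theorem IsAmplySupplemented.of_orderIso [SemilatticeSup α] [OrderTop α] [SemilatticeSup β]
    [OrderTop β] (h : IsAmplySupplemented β) (e : α ≃o β) : IsAmplySupplemented α := by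
  intro a b hab
  obtain ⟨p, hpa, hp⟩ := h (hab.map_orderIso e)
  refine ⟨e.symm p, e.symm_apply_le.2 hpa, ?_, fun c hc hcp ↦ ?_⟩
  · simpa only [e.symm_apply_apply] using hp.prop.map_orderIso e.symm
  · exact e.symm_apply_le.2 (hp.le_of_le (hc.map_orderIso e) (e.le_symm_apply.1 hcp))

theorem u_l_eq_self_of_codisjoint [Lattice α] [OrderTop α] [IsModularLattice α] [SemilatticeInf β]
    {l : α → β} {u : β → α} (gc : GaloisConnection l u) {a b : α} (hab : Codisjoint a b)
    (hl : l a ⊓ l b ≤ l (a ⊓ b)) (hclosed : u (l (a ⊓ b)) = a ⊓ b) : u (l a) = a := by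
  refine le_antisymm ?_ (gc.le_u_l a)
  calc u (l a) = (a ⊔ b) ⊓ u (l a) := by rw [hab.eq_top, top_inf_eq]
    _ = a ⊔ b ⊓ u (l a) := sup_inf_assoc_of_le b (gc.le_u_l a)
    _ ≤ a ⊔ u (l b) ⊓ u (l a) := by gcongr; exact gc.le_u_l b
    _ = a ⊔ u (l a ⊓ l b) := by rw [gc.u_inf, inf_comm]
    _ ≤ a ⊔ u (l (a ⊓ b)) := sup_le_sup_left (gc.monotone_u hl) a
    _ = a := by rw [hclosed, sup_inf_self]

end Lattice

theorem isSemisimpleModule_iff_forall_exists_inf_le_ker {A B M N : Type*} [Ring A] [Ring B]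
    [AddCommGroup M] [Module A M] [AddCommGroup N] [Module B N] {σ : A →+* B} [RingHomSurjective σ]
    {f : M →ₛₗ[σ] N} (hf : Function.Surjective f) :
    IsSemisimpleModule B N ↔
      ∀ P : Submodule A M, ∃ K : Submodule A M, P ⊔ K = ⊤ ∧ P ⊓ K ≤ LinearMap.ker f := by
  rw [isSemisimpleModule_iff]
  refine ⟨fun _ P ↦ ?_, fun h ↦ ⟨fun P ↦ ?_⟩⟩
  · obtain ⟨Q, hQ⟩ := exists_isCompl (P.map f)
    refine ⟨Q.comap f, ?_, ?_⟩
    · have hker : LinearMap.ker f ≤ P ⊔ Q.comap f := (LinearMap.ker_le_comap f).trans le_sup_right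
      rw [← Submodule.comap_map_eq_self hker, Submodule.map_sup,
        Submodule.map_comap_eq_of_surjective hf, hQ.sup_eq_top, Submodule.comap_top]
    · calc P ⊓ Q.comap f ≤ (P.map f).comap f ⊓ Q.comap f :=
            inf_le_inf_right _ (Submodule.le_comap_map f P)
        _ = LinearMap.ker f := by
          rw [← Submodule.comap_inf, hQ.inf_eq_bot, LinearMap.ker]
  · obtain ⟨K, hsup, hinf⟩ := h (P.comap f)
    refine ⟨K.map f, disjoint_iff.2 ?_, codisjoint_iff.2 ?_⟩
    · rw [← le_bot_iff]
      rintro _ ⟨hP, k, hk, rfl⟩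
      exact hinf ⟨hP, hk⟩
    · rw [← Submodule.map_comap_eq_of_surjective hf P, ← Submodule.map_sup, hsup,
        Submodule.map_top, LinearMap.range_eq_top.2 hf]

section Ring

variable {R : Type*} [Ring R]

theorem isUnit_one_sub_of_mem_jacobson_bot {j : R} (hj : j ∈ Ideal.jacobson (⊥ : Ideal R)) :
    IsUnit (1 - j) := by
  have exists_left_inv (r : R) (hr : r - 1 ∈ Ideal.jacobson (⊥ : Ideal R)) : ∃ s, s * r = 1 := by
    simpa only [Ideal.mem_bot, sub_eq_zero] using
      Ideal.exists_mul_sub_mem_of_sub_one_mem_jacobson r hr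
  obtain ⟨u, hu⟩ := exists_left_inv (1 - j) (by simpa using hj)
  have hu_sub : u - 1 = u * j := by rw [← hu]; noncomm_ring
  obtain ⟨v, hv⟩ := exists_left_inv u (hu_sub ▸ Ideal.mul_mem_left _ u hj)
  exact ⟨⟨1 - j, u, left_inv_eq_right_inv hv hu ▸ hv, hu⟩, rfl⟩

theorem eq_zero_of_mul_eq_self_of_mem_jacobson_bot {j w : R}
    (hj : j ∈ Ideal.jacobson (⊥ : Ideal R)) (h : j * w = w) : w = 0 :=
  (isUnit_one_sub_of_mem_jacobson_bot hj).mul_right_eq_zero.1 <| by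
    rw [sub_mul, one_mul, h, sub_self]

theorem isSmallLeftIdeal_iff_le_jacobson_bot {I : Ideal R} :
    IsSmallLeftIdeal R I ↔ I ≤ Ideal.jacobson ⊥ := by
  refine ⟨fun h ↦ le_sInf fun M hM ↦ ?_, fun h K hK ↦ ?_⟩
  · exact sup_eq_right.1 (hM.2.eq_of_le (h M hM.2.ne_top) le_sup_right).symm
  · obtain ⟨M, hM, hKM⟩ := Ideal.exists_le_maximal K hK
    have hIM : I ≤ M := h.trans (sInf_le ⟨bot_le, hM⟩)
    exact ne_top_of_le_ne_top hM.ne_top (sup_le hIM hKM)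

theorem mul_mem_of_mem_rightIdeal {T : Submodule Rᵐᵒᵖ R} {a : R} (ha : a ∈ T) (b : R) : a * b ∈ T :=
  T.smul_mem (MulOpposite.op b) ha

theorem isSmallRightIdeal_of_subset_jacobson_bot {I : Submodule Rᵐᵒᵖ R}
    (h : (I : Set R) ⊆ Ideal.jacobson (⊥ : Ideal R)) : IsSmallRightIdeal R I := by
  intro K hK hIK
  obtain ⟨i, hi, k, hk, hik⟩ := Submodule.mem_sup.1 (hIK ▸ Submodule.mem_top : (1 : R) ∈ I ⊔ K)
  obtain ⟨v, hv⟩ := (isUnit_one_sub_of_mem_jacobson_bot (h hi)).exists_right_inv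
  rw [sub_eq_of_eq_add' hik.symm] at hv
  have hone : (1 : R) ∈ K := hv ▸ mul_mem_of_mem_rightIdeal hk v
  exact hK (eq_top_iff.2 fun x _ ↦ by simpa only [one_mul] using mul_mem_of_mem_rightIdeal hone x)

section WeakSupplement

theorem isSemilocalRing_iff_forall_hasWeakSupplementLeft :
    IsSemilocalRing R ↔ ∀ I : Ideal R, HasWeakSupplementLeft R I := by
  rw [IsSemilocalRing, isSemisimpleModule_iff_forall_exists_inf_le_ker
    (Submodule.mkQ_surjective (Ideal.jacobson (⊥ : Ideal R)))]
  simp only [Submodule.ker_mkQ, HasWeakSupplementLeft, isSmallLeftIdeal_iff_le_jacobson_bot]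

theorem isSemisimpleRing_quotient_jacobson_bot (h : IsSemilocalRing R) :
    IsSemisimpleRing (R ⧸ Ideal.jacobson (⊥ : Ideal R)) := by
  let J := Ideal.jacobson (⊥ : Ideal R)
  let idₛₗ : R ⧸ J →ₛₗ[Ideal.Quotient.mk J] R ⧸ J :=
    { toFun := id
      map_add' := fun _ _ ↦ rfl
      map_smul' := fun _ x ↦ Quotient.inductionOn' x fun _ ↦ rfl }
  exact (idₛₗ.isSemisimpleModule_iff_of_bijective Function.bijective_id).1 h

theorem hasWeakSupplementRight_of_isSemilocalRing (h : IsSemilocalRing R) (I : Submodule Rᵐᵒᵖ R) :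
    HasWeakSupplementRight R I := by
  have := isSemisimpleRing_quotient_jacobson_bot h
  let J := Ideal.jacobson (⊥ : Ideal R)
  let π := Ideal.Quotient.mk J
  have : RingHomSurjective π.op :=
    ⟨fun x ↦ (Ideal.Quotient.mk_surjective x.unop).imp' MulOpposite.op fun _ ↦ congrArg _⟩
  let mkRight : R →ₛₗ[π.op] R ⧸ J :=
    { toFun := π
      map_add' := map_add π
      map_smul' := fun c x ↦ map_mul π x c.unop }
  obtain ⟨K, hsup, hinf⟩ := (isSemisimpleModule_iff_forall_exists_inf_le_ker
    (f := mkRight) Ideal.Quotient.mk_surjective).1 inferInstance I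
  exact ⟨K, hsup, isSmallRightIdeal_of_subset_jacobson_bot fun x hx ↦
    Ideal.Quotient.eq_zero_iff_mem.1 (hinf hx)⟩

end WeakSupplement

section AmplySupplemented

theorem isSemilocalRing_of_isAmplySupplemented (h : IsAmplySupplemented (Ideal R)) :
    IsSemilocalRing R :=
  isSemilocalRing_iff_forall_hasWeakSupplementLeft.2 fun _ ↦
    let ⟨K, _, hK⟩ := h codisjoint_top_left
    ⟨K, hK.prop.eq_top, fun _ ↦ hK.inf_sup_ne_top⟩

theorem IsSupplement.mem_span_mul_self {P Q : Ideal R} (h : IsSupplement P Q) {x y : R}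
    (hx : x ∈ P) (hy : y ∈ Q) (hxy : x + y = 1) : x ∈ Ideal.span {x * x} := by
  have hcodisjoint : Codisjoint Q (Ideal.span {x * x}) := by
    rw [codisjoint_iff, Ideal.eq_top_iff_one, ← hxy]
    refine add_mem ?_ (Ideal.mem_sup_left hy)
    have hmem : x * y + x * x ∈ Q ⊔ Ideal.span {x * x} :=
      Submodule.add_mem_sup (Q.mul_mem_left x hy) (Ideal.mem_span_singleton_self _)
    rwa [← mul_add, add_comm y, hxy, mul_one] at hmem
  have hle : Ideal.span {x * x} ≤ P := (Ideal.span_singleton_le_iff_mem P).2 (P.mul_mem_left x hx)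
  exact h.le_of_le hcodisjoint hle hx

theorem mul_eq_zero_of_isSupplement_of_isSupplement {P Q : Ideal R} (hPQ : IsSupplement P Q)
    (hQP : IsSupplement Q P) {x y : R} (hx : x ∈ P) (hy : y ∈ Q) (hxy : x + y = 1) :
    x * y = 0 := by
  have hcomm : Commute x y := by
    rw [eq_sub_of_add_eq' hxy]
    exact (Commute.one_right x).sub_right (Commute.refl x)
  obtain ⟨s, hs⟩ := Ideal.mem_span_singleton'.1 (hPQ.mem_span_mul_self hx hy hxy)
  obtain ⟨t, ht⟩ := Ideal.mem_span_singleton'.1 (hQP.mem_span_mul_self hy hx (by rwa [add_comm]))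
  have hw : s * t * (x * y) * (x * y) = x * y :=
    calc s * t * (x * y) * (x * y) = s * t * (y * x) * (x * y) := by rw [hcomm.eq]
      _ = s * t * y * (x * x * y) := by simp only [mul_assoc]
      _ = s * t * y * (y * (x * x)) := by rw [(hcomm.mul_left hcomm).eq]
      _ = s * (t * (y * y)) * (x * x) := by simp only [mul_assoc]
      _ = s * (y * (x * x)) := by rw [ht, mul_assoc]
      _ = s * (x * x * y) := by rw [(hcomm.mul_left hcomm).eq]
      _ = x * y := by rw [← mul_assoc, hs]
  have hJ : Q ⊓ P ≤ Ideal.jacobson ⊥ :=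
    isSmallLeftIdeal_iff_le_jacobson_bot.1 fun _ ↦ hPQ.inf_sup_ne_top
  have hmem : x * y ∈ Q ⊓ P := ⟨Q.mul_mem_left x hy, hcomm.eq ▸ P.mul_mem_left y hx⟩
  exact eq_zero_of_mul_eq_self_of_mem_jacobson_bot (hJ ((Q ⊓ P).mul_mem_left (s * t) hmem)) hw

theorem sub_mem_of_mem_span_of_one_sub_mem_span {I : Ideal R} {a e : R}
    (ha : a * a - a ∈ I) (he : e ∈ Ideal.span {a}) (he' : 1 - e ∈ Ideal.span {1 - a}) :
    e - a ∈ I := by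
  obtain ⟨s, hs⟩ := Ideal.mem_span_singleton'.1 he
  obtain ⟨t, ht⟩ := Ideal.mem_span_singleton'.1 he'
  have hdecomp : e - a = (t - s) * (a * a - a) :=
    calc e - a = e * (1 - a) - (1 - e) * a := by noncomm_ring
      _ = s * a * (1 - a) - t * (1 - a) * a := by rw [hs, ht]
      _ = (t - s) * (a * a - a) := by noncomm_ring
  exact hdecomp ▸ I.mul_mem_left _ ha

theorem isSemiperfectRing_of_isAmplySupplemented (h : IsAmplySupplemented (Ideal R)) :
    IsSemiperfectRing R := by
  refine ⟨isSemilocalRing_of_isAmplySupplemented h, fun a ha ↦ ?_⟩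
  have hcodisjoint : Codisjoint (Ideal.span {a}) (Ideal.span {1 - a}) := by
    have hmem : a + (1 - a) ∈ Ideal.span {a} ⊔ Ideal.span {1 - a} :=
      Submodule.add_mem_sup (Ideal.mem_span_singleton_self _) (Ideal.mem_span_singleton_self _)
    rwa [add_sub_cancel, ← Ideal.eq_top_iff_one, ← codisjoint_iff] at hmem
  obtain ⟨P, hPa, Q, hQa, hPQ, hQP⟩ := h.exists_isSupplement_isSupplement hcodisjoint
  obtain ⟨x, hx, y, hy, hxy⟩ :=
    Submodule.mem_sup.1 (hQP.prop.eq_top ▸ Submodule.mem_top : (1 : R) ∈ P ⊔ Q)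
  obtain rfl : y = 1 - x := eq_sub_of_add_eq' hxy
  refine ⟨x, ?_, sub_mem_of_mem_span_of_one_sub_mem_span ha (hPa hx) (hQa hy)⟩
  have hzero := mul_eq_zero_of_isSupplement_of_isSupplement hPQ hQP hx hy hxy
  rwa [mul_sub, mul_one, sub_eq_zero, eq_comm] at hzero

end AmplySupplemented

section Annihilator

variable (R) in
/-- The right annihilator of a subset, as a right ideal; the mirror image of `lAnnIdeal`. -/
def rAnnIdeal (X : Set R) : Submodule Rᵐᵒᵖ R where
  carrier := rAnn R X
  add_mem' ha hb x hx := by rw [mul_add, ha x hx, hb x hx, add_zero]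
  zero_mem' x _ := mul_zero x
  smul_mem' c a ha x hx := by
    rw [MulOpposite.smul_eq_mul_unop, ← mul_assoc, ha x hx, zero_mul]

variable (R) in
theorem gc_rAnnIdeal_lAnnIdeal :
    GaloisConnection (fun I : Ideal R ↦ OrderDual.toDual (rAnnIdeal R I))
      (fun T : (Submodule Rᵐᵒᵖ R)ᵒᵈ ↦ lAnnIdeal R (OrderDual.ofDual T : Submodule Rᵐᵒᵖ R)) :=
  fun _ _ ↦ ⟨fun h _ ha _ ht ↦ h ht _ ha, fun h _ ht _ ha ↦ h ha _ ht⟩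

variable (R) in
theorem gc_lAnnIdeal_rAnnIdeal :
    GaloisConnection (fun T : Submodule Rᵐᵒᵖ R ↦ OrderDual.toDual (lAnnIdeal R T))
      (fun I : (Ideal R)ᵒᵈ ↦ rAnnIdeal R (OrderDual.ofDual I : Ideal R)) :=
  (gc_rAnnIdeal_lAnnIdeal R).dual

theorem isLeftDual_iff : IsLeftDual R ↔ ∀ I : Ideal R, lAnnIdeal R (rAnnIdeal R I) = I :=
  forall_congr' fun I ↦ SetLike.coe_set_eq (p := lAnnIdeal R (rAnnIdeal R I)) (q := I)

theorem isRightDual_iff :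
    IsRightDual R ↔ ∀ T : Submodule Rᵐᵒᵖ R, rAnnIdeal R (lAnnIdeal R T) = T :=
  forall_congr' fun T ↦ SetLike.coe_set_eq (p := rAnnIdeal R (lAnnIdeal R T)) (q := T)

/-- In a dual ring, taking annihilators is an anti-isomorphism between the lattices of left and of
right ideals. -/
def annihilatorOrderIso (hl : IsLeftDual R) (hr : IsRightDual R) :
    Ideal R ≃o (Submodule Rᵐᵒᵖ R)ᵒᵈ where
  toFun I := OrderDual.toDual (rAnnIdeal R I)
  invFun T := lAnnIdeal R (OrderDual.ofDual T : Submodule Rᵐᵒᵖ R)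
  left_inv := isLeftDual_iff.1 hl
  right_inv := isRightDual_iff.1 hr
  map_rel_iff' {I K} :=
    (gc_rAnnIdeal_lAnnIdeal R I (OrderDual.toDual (rAnnIdeal R K))).trans
      (iff_of_eq (congrArg (I ≤ ·) (isLeftDual_iff.1 hl K)))

theorem isSemiperfectRing_of_isLeftDual_of_isRightDual (hl : IsLeftDual R) (hr : IsRightDual R) :
    IsSemiperfectRing R :=
  isSemiperfectRing_of_isAmplySupplemented
    (isAmplySupplemented_orderDual.of_orderIso (annihilatorOrderIso hl hr))

theorem rAnnIdeal_inf_le {I K : Ideal R} (hIK : I ⊔ K = ⊤) :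
    rAnnIdeal R (I ⊓ K : Ideal R) ≤ rAnnIdeal R I ⊔ rAnnIdeal R K := by
  obtain ⟨i, hi, k, hk, hik⟩ := Submodule.mem_sup.1 (hIK ▸ Submodule.mem_top : (1 : R) ∈ I ⊔ K)
  intro y hy
  refine Submodule.mem_sup.2 ⟨k * y, fun a ha ↦ ?_, i * y, fun a ha ↦ ?_, ?_⟩
  · have hak : a - a * i = a * k := by rw [sub_eq_iff_eq_add', ← mul_add, hik, mul_one]
    rw [← mul_assoc]
    exact hy _ ⟨hak ▸ I.sub_mem ha (I.mul_mem_left a hi), K.mul_mem_left a hk⟩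
  · have hai : a - a * k = a * i := by rw [sub_eq_iff_eq_add, ← mul_add, hik, mul_one]
    rw [← mul_assoc]
    exact hy _ ⟨I.mul_mem_left a hi, hai ▸ K.sub_mem ha (K.mul_mem_left a hk)⟩
  · rw [← add_mul, add_comm, hik, one_mul]

theorem lAnnIdeal_inf_le {T U : Submodule Rᵐᵒᵖ R} (hTU : T ⊔ U = ⊤) :
    lAnnIdeal R (T ⊓ U : Submodule Rᵐᵒᵖ R) ≤ lAnnIdeal R T ⊔ lAnnIdeal R U := by
  obtain ⟨t, ht, u, hu, htu⟩ := Submodule.mem_sup.1 (hTU ▸ Submodule.mem_top : (1 : R) ∈ T ⊔ U)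
  intro y hy
  refine Submodule.mem_sup.2 ⟨y * u, fun a ha ↦ ?_, y * t, fun a ha ↦ ?_, ?_⟩
  · have hua : a - t * a = u * a := by rw [sub_eq_iff_eq_add', ← add_mul, htu, one_mul]
    rw [mul_assoc]
    exact hy _ ⟨hua ▸ T.sub_mem ha (mul_mem_of_mem_rightIdeal ht a), mul_mem_of_mem_rightIdeal hu a⟩
  · have hta : a - u * a = t * a := by rw [sub_eq_iff_eq_add, ← add_mul, htu, one_mul]
    rw [mul_assoc]
    exact hy _ ⟨mul_mem_of_mem_rightIdeal ht a, hta ▸ U.sub_mem ha (mul_mem_of_mem_rightIdeal hu a)⟩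
  · rw [← mul_add, add_comm, htu, mul_one]

theorem IsLeftSmallDual.isLeftDual (hd : IsLeftSmallDual R)
    (h : ∀ I : Ideal R, HasWeakSupplementLeft R I) : IsLeftDual R :=
  isLeftDual_iff.2 fun I ↦
    let ⟨_, hsup, hsmall⟩ := h I
    u_l_eq_self_of_codisjoint (gc_rAnnIdeal_lAnnIdeal R) (codisjoint_iff.2 hsup)
      (rAnnIdeal_inf_le hsup) (SetLike.coe_injective (hd _ hsmall))

theorem IsRightSmallDual.isRightDual (hd : IsRightSmallDual R)
    (h : ∀ T : Submodule Rᵐᵒᵖ R, HasWeakSupplementRight R T) : IsRightDual R :=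
  isRightDual_iff.2 fun T ↦
    let ⟨_, hsup, hsmall⟩ := h T
    u_l_eq_self_of_codisjoint (gc_lAnnIdeal_rAnnIdeal R) (codisjoint_iff.2 hsup)
      (lAnnIdeal_inf_le hsup) (SetLike.coe_injective (hd _ hsmall))

end Annihilator

end Ring

/-- `R` is a dual ring iff `R` is semilocal and small dual iff `R` is
semiperfect and small dual. -/
theorem dual_tfae_semilocal_smallDual (R : Type*) [Ring R] :
    [ IsLeftDual R ∧ IsRightDual R,
      IsSemilocalRing R ∧ (IsLeftSmallDual R ∧ IsRightSmallDual R),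
      IsSemiperfectRing R ∧ (IsLeftSmallDual R ∧ IsRightSmallDual R) ].TFAE := by
  tfae_have 1 → 3 := fun ⟨hl, hr⟩ ↦
    ⟨isSemiperfectRing_of_isLeftDual_of_isRightDual hl hr, fun I _ ↦ hl I, fun T _ ↦ hr T⟩
  tfae_have 3 → 2 := fun ⟨hR, hdual⟩ ↦ ⟨hR.1, hdual⟩
  tfae_have 2 → 1 := fun ⟨hR, hl, hr⟩ ↦
    ⟨hl.isLeftDual (isSemilocalRing_iff_forall_hasWeakSupplementLeft.1 hR),
      hr.isRightDual (hasWeakSupplementRight_of_isSemilocalRing hR)⟩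
  tfae_finish
end

section
/- Let R be a right small dual ring satisfying the ascending chain condition on essential right ideals (every ascending chain of essential right ideals of R stabilizes). Then the Jacobson radical J of R is nilpotent, i.e., J^n = 0 for some n ≥ 1. -/
open Pointwise

/-!
Write `S = Rᵐᵒᵖ`, so that right ideals of `R` are `S`-submodules. Two facts hold for every
`S`-module `M` with the ascending chain condition on essential submodules.

* The submodules `Lₙ = {x | Jⁿ x = 0}` stabilize: choose `C` disjoint from `L₁` with `L₁ ⊔ C`
  essential. Then `C` is disjoint from every `Lₙ`, the chain `Lₙ ⊔ C` stabilizes, and the modular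
  law cancels `C`.
* If `N ≤ J N` then `N = 0`: every quotient of `M` by an essential submodule is Noetherian, so by
  Nakayama `N` lies in all essential submodules. This makes `N` semisimple, hence `J N = 0`.

For `M = R` the submodule `Lₙ` is the left annihilator of `Jⁿ`. The powers of `J` are small, so
the double annihilator condition turns stabilization of the `Lₙ` into `Jⁿ = Jⁿ⁺¹` for some `n`,
and the second fact gives `Jⁿ = 0`.
-/

section Lattice

variable {α : Type*}

/-- An element of a lattice is essential if it meets every nonzero element. For the lattice of
right ideals this unfolds to `IsEssentialRightIdeal`. -/
def IsEssential [SemilatticeInf α] [OrderBot α] (a : α) : Prop :=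
  ∀ b, b ≠ ⊥ → a ⊓ b ≠ ⊥

theorem IsEssential.mono [SemilatticeInf α] [OrderBot α] {a b : α} (ha : IsEssential a)
    (hab : a ≤ b) : IsEssential b :=
  fun c hc hbc => ha c hc (eq_bot_mono (inf_le_inf_right c hab) hbc)

variable [CompleteLattice α] [IsModularLattice α] [IsCompactlyGenerated α]

theorem exists_disjoint_isEssential_sup (a : α) : ∃ c, Disjoint a c ∧ IsEssential (a ⊔ c) := by
  obtain ⟨c, hc⟩ := zorn_le₀ {c | Disjoint a c} fun s hs hchain =>
    ⟨sSup s, hchain.directedOn.disjoint_sSup_right.2 fun _ hb => hs hb, fun _ => le_sSup⟩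
  refine ⟨c, hc.prop, fun b hb hbot => hb ?_⟩
  have hdisj : Disjoint (a ⊔ c) b := disjoint_iff.2 hbot
  have hbc : b ≤ c := le_sup_right.trans <|
    hc.le_of_ge (hc.prop.disjoint_sup_right_of_disjoint_sup_left hdisj) le_sup_left
  exact hdisj.eq_bot_of_ge (hbc.trans le_sup_right)

theorem complementedLattice_Iic_of_le_isEssential {a : α} (ha : ∀ e, IsEssential e → a ≤ e) :
    ComplementedLattice (Set.Iic a) := by
  rw [Set.Iic.complementedLattice_iff]
  intro b hba
  obtain ⟨c, hbc, hess⟩ := exists_disjoint_isEssential_sup b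
  refine ⟨c ⊓ a, inf_le_right, (hbc.mono_right inf_le_left).eq_bot, ?_⟩
  rw [← sup_inf_assoc_of_le c hba, inf_eq_right.2 (ha _ hess)]

end Lattice

theorem wellFoundedGT_subtype {α : Type*} [PartialOrder α] {p : α → Prop}
    (acc : ∀ f : ℕ →o α, (∀ k, p (f k)) → ∃ N, ∀ m, N ≤ m → f m = f N) :
    WellFoundedGT {a // p a} := by
  rw [wellFoundedGT_iff_monotone_chain_condition]
  intro f
  obtain ⟨N, hN⟩ := acc ((OrderHom.Subtype.val p).comp f) fun k => (f k).2
  exact ⟨N, fun m hm => Subtype.ext (hN m hm).symm⟩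

section Module

variable {S M : Type*} [Ring S] [AddCommGroup M] [Module S M]

theorem sup_ne_top_of_le_jacobson [IsCoatomic (Submodule S M)] {N K : Submodule S M}
    (hN : N ≤ Module.jacobson S M) (hK : K ≠ ⊤) : N ⊔ K ≠ ⊤ := by
  obtain ⟨m, hm, hKm⟩ := (eq_top_or_exists_le_coatom K).resolve_left hK
  exact ne_top_of_le_ne_top hm.1 (sup_le (hN.trans (sInf_le hm)) hKm)

theorem isSemisimpleModule_of_le_isEssential {N : Submodule S M}
    (hN : ∀ E : Submodule S M, IsEssential E → N ≤ E) : IsSemisimpleModule S N :=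
  have := complementedLattice_Iic_of_le_isEssential hN
  (isSemisimpleModule_iff ..).2 N.mapIic.symm.complementedLattice

theorem jacobson_smul_eq_bot (N : Submodule S M) [IsSemisimpleModule S N] :
    Ring.jacobson S • N = ⊥ :=
  eq_bot_mono (Submodule.smul_mono_left (IsSemisimpleModule.jacobson_le_annihilator S N))
    N.annihilator_smul

section ChainCondition

variable [WellFoundedGT {E : Submodule S M // IsEssential E}]

theorem isNoetherian_quotient_of_isEssential {E : Submodule S M} (hE : IsEssential E) :
    IsNoetherian S (M ⧸ E) := by
  rw [isNoetherian_iff']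
  let toEssential (N : Submodule S (M ⧸ E)) : {E : Submodule S M // IsEssential E} :=
    ⟨N.comap E.mkQ, hE.mono (E.le_comap_mkQ N)⟩
  have hmono : StrictMono toEssential := (Submodule.comapMkQOrderEmbedding E).strictMono
  exact hmono.wellFoundedGT

theorem le_isEssential_of_le_jacobson_smul {N E : Submodule S M}
    (hN : N ≤ Ring.jacobson S • N) (hE : IsEssential E) : N ≤ E := by
  have := isNoetherian_quotient_of_isEssential hE
  have hmap : N.map E.mkQ ≤ Ring.jacobson S • N.map E.mkQ := by
    rw [← Submodule.map_smul'']
    exact Submodule.map_mono hN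
  have hbot := (IsNoetherian.noetherian (N.map E.mkQ)).eq_bot_of_le_jacobson_smul hmap
  rwa [← LinearMap.le_ker_iff_map, E.ker_mkQ] at hbot

theorem eq_bot_of_le_jacobson_smul {N : Submodule S M} (hN : N ≤ Ring.jacobson S • N) :
    N = ⊥ := by
  have := isSemisimpleModule_of_le_isEssential fun E => le_isEssential_of_le_jacobson_smul hN
  exact eq_bot_mono hN (jacobson_smul_eq_bot N)

end ChainCondition

section Annihilated

variable (M) in
/-- The submodule of elements of `M` killed by a two-sided ideal `I`, the noncommutative analogue
of `Submodule.torsionBySet`. -/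
def annihilatedBy (I : Ideal S) [I.IsTwoSided] : Submodule S M where
  carrier := {x | ∀ s ∈ I, s • x = 0}
  add_mem' hx hy s hs := by rw [smul_add, hx s hs, hy s hs, add_zero]
  zero_mem' s _ := smul_zero s
  smul_mem' t x hx s hs := by rw [smul_smul, hx _ (I.mul_mem_right t hs)]

theorem annihilatedBy_antitone {I K : Ideal S} [I.IsTwoSided] [K.IsTwoSided] (hIK : I ≤ K) :
    annihilatedBy M K ≤ annihilatedBy M I :=
  fun _ hx s hs => hx s (hIK hs)

variable (I : Ideal S) [I.IsTwoSided]

theorem disjoint_annihilatedBy_pow {C : Submodule S M} (hC : Disjoint (annihilatedBy M I) C)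
    (n : ℕ) : Disjoint (annihilatedBy M (I ^ n)) C := by
  rw [Submodule.disjoint_def] at hC ⊢
  induction n with
  | zero =>
    intro x hx _
    have hone : (1 : S) ∈ I ^ 0 := by rw [Submodule.pow_zero, Ideal.one_eq_top]; trivial
    simpa only [one_smul] using hx 1 hone
  | succ n ih =>
    refine fun x hx hxC => hC x (fun s hs => ?_) hxC
    refine ih (s • x) (fun t ht => ?_) (C.smul_mem s hxC)
    rw [smul_smul]
    exact hx _ (Ideal.mul_mem_mul ht hs)

theorem exists_annihilatedBy_pow_succ_eq [WellFoundedGT {E : Submodule S M // IsEssential E}] :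
    ∃ n, annihilatedBy M (I ^ (n + 1)) = annihilatedBy M (I ^ (n + 2)) := by
  have hpow {m n : ℕ} (hmn : m ≤ n) : annihilatedBy M (I ^ m) ≤ annihilatedBy M (I ^ n) :=
    annihilatedBy_antitone (Ideal.pow_le_pow_right hmn)
  obtain ⟨C, hdisj, hess⟩ := exists_disjoint_isEssential_sup (annihilatedBy M I)
  have hessential (n : ℕ) : IsEssential (annihilatedBy M (I ^ (n + 1)) ⊔ C) :=
    hess.mono (sup_le_sup_right (annihilatedBy_antitone (Ideal.pow_le_self n.succ_ne_zero)) C)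
  let chain : ℕ →o {E : Submodule S M // IsEssential E} :=
    ⟨fun n => ⟨_, hessential n⟩, fun _ _ hmn => sup_le_sup_right (hpow (Nat.succ_le_succ hmn)) C⟩
  obtain ⟨n, hn⟩ := WellFoundedGT.monotone_chain_condition chain
  have hsup : annihilatedBy M (I ^ (n + 1)) ⊔ C = annihilatedBy M (I ^ (n + 2)) ⊔ C :=
    congrArg Subtype.val (hn (n + 1) n.le_succ)
  have hinf := (disjoint_annihilatedBy_pow I hdisj (n + 2)).eq_bot
  exact ⟨n, eq_of_le_of_inf_le_of_sup_le (hpow (n + 1).le_succ) (hinf.trans_le bot_le) hsup.ge⟩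

end Annihilated

end Module

section Ring

variable {R : Type*} [Ring R]

theorem isUnit_add_one_of_mem_jacobson {x : R} (hx : x ∈ Ring.jacobson R) : IsUnit (x + 1) := by
  have exists_left_inv {y : R} (hy : y ∈ Ring.jacobson R) : ∃ s, s * (y + 1) = 1 := by
    rw [← Ideal.jacobson_bot] at hy
    obtain ⟨s, hs⟩ := Ideal.exists_mul_add_sub_mem_of_mem_jacobson y hy
    exact ⟨s, sub_eq_zero.1 hs⟩
  obtain ⟨s, hs⟩ := exists_left_inv hx
  -- The left inverse `s = 1 - s * x` has the same form as `x + 1`, so it has a left inverse too.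
  obtain ⟨t, ht⟩ := exists_left_inv (neg_mem (Ideal.mul_mem_left _ s hx))
  have hts : t * s = 1 := by
    rwa [show s = -(s * x) + 1 by rw [← hs]; noncomm_ring]
  exact isUnit_iff_exists.2 ⟨s, left_inv_eq_right_inv hts hs ▸ hts, hs⟩

theorem op_mem_jacobson {x : R} (hx : x ∈ Ring.jacobson R) :
    MulOpposite.op x ∈ Ring.jacobson Rᵐᵒᵖ := by
  rw [← Ideal.jacobson_bot, Ideal.mem_jacobson_iff]
  intro y
  obtain ⟨z, hz⟩ := (isUnit_add_one_of_mem_jacobson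
    (Ideal.mul_mem_right y.unop _ hx)).exists_right_inv
  refine ⟨MulOpposite.op z, ?_⟩
  rw [Ideal.mem_bot, sub_eq_zero]
  apply MulOpposite.unop_injective
  simpa [add_mul, mul_assoc] using hz

theorem op_prod_ofFn_mem_pow {I : Ideal Rᵐᵒᵖ} {n : ℕ} {a : Fin n → R}
    (ha : ∀ i, MulOpposite.op (a i) ∈ I) : MulOpposite.op (List.ofFn a).prod ∈ I ^ n := by
  induction n with
  | zero => rw [Submodule.pow_zero, Ideal.one_eq_top]; trivial
  | succ n ih =>
    rw [List.ofFn_succ, List.prod_cons, MulOpposite.op_mul]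
    exact Ideal.mul_mem_mul (ih fun i => ha i.succ) (ha 0)

theorem finite_mulOpposite : Module.Finite Rᵐᵒᵖ R :=
  ⟨⟨{1}, eq_top_iff.2 fun x _ => by
    simpa using Submodule.mem_span_singleton.2 ⟨MulOpposite.op x, one_mul x⟩⟩⟩

theorem isSmallRightIdeal_smul_top {I : Ideal Rᵐᵒᵖ} (hI : I ≤ Ring.jacobson Rᵐᵒᵖ) :
    IsSmallRightIdeal R (I • ⊤) :=
  have := finite_mulOpposite (R := R)
  fun _ => sup_ne_top_of_le_jacobson <|
    (Submodule.smul_mono_left hI).trans (Ring.jacobson_smul_top_le Rᵐᵒᵖ R)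

theorem lAnn_smul_top (I : Ideal Rᵐᵒᵖ) [I.IsTwoSided] :
    lAnn R (I • ⊤ : Submodule Rᵐᵒᵖ R) = annihilatedBy R I := by
  ext x
  refine ⟨fun hx s hs => ?_, fun hx y hy => ?_⟩
  · exact hx s.unop (by simpa using Submodule.smul_mem_smul hs (Submodule.mem_top (x := (1 : R))))
  · induction hy using Submodule.smul_induction_on' with
    | smul s hs z _ => exact hx (s * MulOpposite.op z) (I.mul_mem_right _ hs)
    | add y _ z _ hy hz => rw [mul_add, hy, hz, add_zero]

theorem IsRightSmallDual.eq_of_lAnn_eq (h : IsRightSmallDual R) {I K : Submodule Rᵐᵒᵖ R}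
    (hI : IsSmallRightIdeal R I) (hK : IsSmallRightIdeal R K)
    (hIK : lAnn R (I : Set R) = lAnn R (K : Set R)) : I = K :=
  SetLike.coe_injective <| by rw [← h I hI, ← h K hK, hIK]

theorem IsRightSmallDual.exists_jacobson_pow_smul_top_eq_bot (h : IsRightSmallDual R)
    [WellFoundedGT {E : Submodule Rᵐᵒᵖ R // IsEssential E}] :
    ∃ n, (Ring.jacobson Rᵐᵒᵖ ^ (n + 1) • ⊤ : Submodule Rᵐᵒᵖ R) = ⊥ := by
  set J := Ring.jacobson Rᵐᵒᵖ
  obtain ⟨n, hn⟩ := exists_annihilatedBy_pow_succ_eq (M := R) J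
  have hsmall (k : ℕ) : IsSmallRightIdeal R (J ^ (k + 1) • ⊤) :=
    isSmallRightIdeal_smul_top (Ideal.pow_le_self k.succ_ne_zero)
  have hlAnn : lAnn R (J ^ (n + 1) • ⊤ : Submodule Rᵐᵒᵖ R) =
      lAnn R (J ^ (n + 2) • ⊤ : Submodule Rᵐᵒᵖ R) := by
    rw [lAnn_smul_top, lAnn_smul_top, hn]
  refine ⟨n, eq_bot_of_le_jacobson_smul (le_of_eq ?_)⟩
  calc (J ^ (n + 1) • ⊤ : Submodule Rᵐᵒᵖ R) = J ^ (n + 2) • ⊤ :=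
        h.eq_of_lAnn_eq (hsmall n) (hsmall (n + 1)) hlAnn
    _ = J • J ^ (n + 1) • ⊤ := by rw [Ideal.IsTwoSided.pow_succ, Submodule.mul_smul]

end Ring

/-- If `R` is right small dual and satisfies ACC on essential right
ideals, then the Jacobson radical `J` is nilpotent: there is `n ≥ 1` such that any
product of `n` elements of `J` vanishes, i.e. `Jⁿ = 0`. -/
theorem rightSmallDual_acc_essential_jacobson_nilpotent (R : Type*) [Ring R]
    (h : IsRightSmallDual R)
    (acc : ∀ f : ℕ →o Submodule Rᵐᵒᵖ R, (∀ k, IsEssentialRightIdeal R (f k)) →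
      ∃ N : ℕ, ∀ m : ℕ, N ≤ m → f m = f N) :
    ∃ n : ℕ, 1 ≤ n ∧ ∀ a : Fin n → R,
      (∀ i, a i ∈ Ideal.jacobson (⊥ : Ideal R)) → (List.ofFn a).prod = 0 := by
  have : WellFoundedGT {E : Submodule Rᵐᵒᵖ R // IsEssential E} := wellFoundedGT_subtype acc
  obtain ⟨n, hn⟩ := h.exists_jacobson_pow_smul_top_eq_bot
  refine ⟨n + 1, Nat.le_add_left 1 n, fun a ha => ?_⟩
  have hop : MulOpposite.op (List.ofFn a).prod ∈ Ring.jacobson Rᵐᵒᵖ ^ (n + 1) :=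
    op_prod_ofFn_mem_pow fun i => op_mem_jacobson (Ideal.jacobson_bot (R := R) ▸ ha i)
  have hmem := Submodule.smul_mem_smul hop (Submodule.mem_top (x := (1 : R)))
  rwa [hn, Submodule.mem_bot, op_smul_eq_mul, one_mul] at hmem
end
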